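/- arXiv:1703.04715 — 3 statements merged into one kernel-verified Lean document; each statement's English description precedes it below -/
import Mathlib

section
/- For every integer k ≥ 2 and every non-negative integer n, the number of partitions of n in which each part is either even but not congruent to 2 modulo 4k, or odd and congruent to 1 or 2k+1 modulo 4k, equals the number of partitions of n in which, whenever an odd part 2j+1 appears, no other part equals any of 2j+1, 2j+2, ..., 2j+2k−1. -/
namespace DualAndrews

/-- multisets that are partitions of `n`. -/
def IsPart (n : ℕ) (m : Multiset ℕ) : Prop := 0 ∉ m ∧ m.sum = n

theorem card_partition (n : ℕ) (P : Multiset ℕ → Prop) :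
    Nat.card {p : Nat.Partition n // P p.parts} =
      Nat.card ({m | IsPart n m ∧ P m} : Set (Multiset ℕ)) := by
  refine Nat.card_congr ⟨fun p => ⟨p.1.parts, ⟨fun h => ?_, p.1.parts_sum⟩, p.2⟩,
    fun m => ⟨⟨m.1, fun {i} hi => ?_, m.2.1.2⟩, m.2.2⟩, fun p => rfl, fun m => rfl⟩
  · exact absurd (p.1.parts_pos h) (lt_irrefl _)
  · exact Nat.pos_of_ne_zero (fun h => m.2.1.1 (h ▸ hi))

/-- Build a multiset from a multiplicity function. -/
def ofCount (N : ℕ) (g : ℕ → ℕ) : Multiset ℕ :=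
  ∑ c ∈ Finset.range N, Multiset.replicate (g c) c

theorem count_ofCount (N : ℕ) (g : ℕ → ℕ) (h : ∀ c, N ≤ c → g c = 0) (c : ℕ) :
    Multiset.count c (ofCount N g) = g c := by
  unfold ofCount
  rw [Multiset.count_sum']
  simp only [Multiset.count_replicate]
  rw [Finset.sum_ite_eq']
  split_ifs with hc
  · rfl
  · rw [h c]; simpa using hc

theorem le_of_mem {n : ℕ} {m : Multiset ℕ} (h : IsPart n m) {c : ℕ} (hc : c ∈ m) : c ≤ n := by
  rw [← h.2]; exact Multiset.le_sum_of_mem hc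

theorem count_zero_of_lt {n : ℕ} {m : Multiset ℕ} (h : IsPart n m) {c : ℕ} (hc : n < c) :
    m.count c = 0 := by
  rw [Multiset.count_eq_zero]
  intro h'
  exact absurd (le_of_mem h h') (by omega)

/-- Class one. -/
def CondA (k : ℕ) (m : Multiset ℕ) : Prop :=
  ∀ c ∈ m, (Even c ∧ c % (4 * k) ≠ 2) ∨
        (Odd c ∧ (c % (4 * k) = 1 ∨ c % (4 * k) = 2 * k + 1))

/-- Intermediate class. -/
def CondM (k : ℕ) (m : Multiset ℕ) : Prop :=
  ∀ c ∈ m, Odd c → c % (2 * k) = 1 ∧ m.count c ≤ 1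

/-- Class two. -/
def CondB (k : ℕ) (m : Multiset ℕ) : Prop :=
  ∀ b ∈ m, Odd b → ∀ c : ℕ, b ≤ c → c + 2 ≤ b + 2 * k →
        Multiset.count c m ≤ if c = b then 1 else 0

/-- Sequences. -/
def SeqT (k n : ℕ) : Set (ℕ → ℕ) :=
  {r | Antitone r ∧ (∀ i, n ≤ i → r i = 0) ∧ ∑ i ∈ Finset.range n, r i = n ∧
    ∀ i, r (i + 1) % 2 = 1 → r (i + 1) / 2 + k ≤ r i / 2}

/-! ### Sequences and class two -/

def toB (n : ℕ) (r : ℕ → ℕ) : Multiset ℕ :=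
  ((Multiset.range n).map r).filter (· ≠ 0)

theorem toB_sum (n : ℕ) (r : ℕ → ℕ) : (toB n r).sum = ∑ i ∈ Finset.range n, r i := by
  have h := Multiset.filter_add_not (· ≠ 0) ((Multiset.range n).map r)
  have h2 : (((Multiset.range n).map r).filter (fun x => ¬ (x ≠ 0))).sum = 0 := by
    apply Multiset.sum_eq_zero
    intro x hx
    simpa using (Multiset.mem_filter.1 hx).2
  have h3 := congrArg Multiset.sum h
  rw [Multiset.sum_add, h2, add_zero] at h3
  exact h3

theorem mem_toB {n : ℕ} {r : ℕ → ℕ} {c : ℕ} :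
    c ∈ toB n r ↔ (∃ i, i < n ∧ r i = c) ∧ c ≠ 0 := by
  simp [toB]

theorem count_toB {n : ℕ} {r : ℕ → ℕ} {c : ℕ} (hc : c ≠ 0) :
    (toB n r).count c = ((Finset.range n).filter (fun i => c = r i)).card := by
  unfold toB
  rw [Multiset.count_filter_of_pos (p := fun x => x ≠ 0) hc, Multiset.count_map]
  rfl

theorem toB_mapsTo (k n : ℕ) (hk : 2 ≤ k) (r : ℕ → ℕ) (hr : r ∈ SeqT k n) :
    IsPart n (toB n r) ∧ CondB k (toB n r) := by
  obtain ⟨ha, hz, hs, hc⟩ := hr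
  refine ⟨⟨fun h => (mem_toB.1 h).2 rfl, by rw [toB_sum, hs]⟩, ?_⟩
  intro b hb hodd c hbc hck
  obtain ⟨⟨i, hi, rfl⟩, hb0⟩ := mem_toB.1 hb
  have hodd' := Nat.odd_iff.1 hodd
  -- anything before i is large
  have key : ∀ j i, j < i → r i % 2 = 1 → r i + 2 * k ≤ r j + 1 := by
    intro j i hji ho
    obtain ⟨i, rfl⟩ : ∃ i', i = i' + 1 := ⟨i - 1, by omega⟩
    have h1 := hc i ho
    have h2 : r i ≤ r j := ha (by omega)
    omega
  split_ifs with h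
  · subst h
    rw [count_toB hb0, Finset.card_le_one]
    intro x hx y hy
    have hx := (Finset.mem_filter.1 hx).2
    have hy := (Finset.mem_filter.1 hy).2
    rcases lt_trichotomy x y with h | h | h
    · have := key x y h (by omega); omega
    · exact h
    · have := key y x h (by omega); omega
  · rw [Nat.le_zero, Multiset.count_eq_zero]
    intro hm
    obtain ⟨⟨j, hj, rfl⟩, _⟩ := mem_toB.1 hm
    have hji : j < i := by
      by_contra hh
      have : r j ≤ r i := ha (by omega)
      omega
    have := key j i hji hodd'
    omega

theorem toB_injOn (k n : ℕ) : Set.InjOn (toB n) (SeqT k n) := by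
  -- the number of entries at least c determines r
  have key : ∀ r ∈ SeqT k n, ∀ c, c ≠ 0 → ∀ i,
      (c ≤ r i ↔ i < ((toB n r).filter (c ≤ ·)).card) := by
    rintro r ⟨ha, hz, -, -⟩ c hc i
    have h1 : ((toB n r).filter (c ≤ ·)).card
        = ((Finset.range n).filter (fun i => c ≤ r i)).card := by
      unfold toB
      rw [Multiset.filter_filter, Multiset.filter_map, Multiset.card_map]
      rw [Finset.card_def, Finset.filter_val]
      congr 1
      apply Multiset.filter_congr
      intro x _
      simp only [Function.comp]
      omega
    rw [h1]
    constructor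
    · intro h
      have hin : i < n := by
        by_contra hh
        have := hz i (by omega)
        omega
      have : Finset.range (i + 1) ⊆ (Finset.range n).filter (fun i => c ≤ r i) := by
        intro j hj
        simp only [Finset.mem_range, Finset.mem_filter] at hj ⊢
        have : r i ≤ r j := ha (by omega)
        omega
      have := Finset.card_le_card this
      simp only [Finset.card_range] at this
      omega
    · intro h
      by_contra hh
      have : (Finset.range n).filter (fun i => c ≤ r i) ⊆ Finset.range i := by
        intro j hj
        simp only [Finset.mem_range, Finset.mem_filter] at hj ⊢
        by_contra h3
        have : r j ≤ r i := ha (by omega)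
        omega
      have := Finset.card_le_card this
      simp only [Finset.card_range] at this
      omega
  intro r hr r' hr' h
  funext i
  apply le_antisymm
  · by_cases h0 : r i = 0
    · omega
    · rw [key r' hr' _ h0, ← h, ← key r hr _ h0]
  · by_cases h0 : r' i = 0
    · omega
    · rw [key r hr _ h0, h, ← key r' hr' _ h0]

theorem exists_seq (n : ℕ) (m : Multiset ℕ) (hm : IsPart n m) :
    ∃ r : ℕ → ℕ, Antitone r ∧ (∀ i, n ≤ i → r i = 0) ∧ toB n r = m := by
  set l := m.sort (· ≥ ·) with hl
  have hlm : (l : Multiset ℕ) = m := Multiset.sort_eq _ _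
  have hs : l.Pairwise (· ≥ ·) := Multiset.pairwise_sort _ _
  have hlen : l.length ≤ n := by
    have h1 : l.length = m.card := by rw [← hlm]; rfl
    rw [h1, ← hm.2]
    have := Multiset.card_nsmul_le_sum (s := m) (a := 1) (fun x hx =>
      Nat.pos_of_ne_zero (fun h => hm.1 (h ▸ hx)))
    simpa using this
  refine ⟨fun i => l.getD i 0, ?_, ?_, ?_⟩
  · intro i j hij
    show l.getD j 0 ≤ l.getD i 0
    by_cases hj : j < l.length
    · rw [List.getD_eq_getElem _ _ hj, List.getD_eq_getElem _ _ (by omega)]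
      rcases hij.lt_or_eq with h | h
      · exact List.pairwise_iff_getElem.1 hs i j (by omega) hj h
      · subst h; rfl
    · rw [List.getD_eq_default _ _ (by omega)]; omega
  · intro i hi
    exact List.getD_eq_default _ _ (by omega)
  · have h1 : (List.range n).map (fun i => l.getD i 0) = l ++ List.replicate (n - l.length) 0 := by
      apply List.ext_getElem
      · simp; omega
      · intro i h1 h2
        simp only [List.getElem_map, List.getElem_range]
        by_cases hi : i < l.length
        · rw [List.getElem_append_left hi, List.getD_eq_getElem _ _ hi]
        · rw [List.getElem_append_right (by omega), List.getD_eq_default _ _ (by omega)]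
          simp
    have h2 : (Multiset.range n).map (fun i => l.getD i 0)
        = m + Multiset.replicate (n - l.length) 0 := by
      rw [← hlm, ← Multiset.coe_replicate, Multiset.coe_add, ← h1]
      rfl
    unfold toB
    rw [h2, Multiset.filter_add]
    have h3 : m.filter (· ≠ 0) = m := by
      rw [Multiset.filter_eq_self]
      intro a ha h
      exact hm.1 (h ▸ ha)
    have h4 : (Multiset.replicate (n - l.length) 0).filter (· ≠ 0) = 0 := by
      rw [Multiset.filter_eq_nil]
      intro a ha
      simp [Multiset.eq_of_mem_replicate ha]
    rw [h3, h4, add_zero]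

theorem toB_bijOn (k n : ℕ) (hk : 2 ≤ k) :
    Set.BijOn (toB n) (SeqT k n) {m | IsPart n m ∧ CondB k m} := by
  refine ⟨fun r hr => toB_mapsTo k n hk r hr, toB_injOn k n, ?_⟩
  rintro m ⟨hm, hB⟩
  obtain ⟨r, ha, hz, rfl⟩ := exists_seq n m hm
  refine ⟨r, ⟨ha, hz, by rw [← toB_sum]; exact hm.2, ?_⟩, rfl⟩
  intro i ho
  have hin : i + 1 < n := by
    by_contra hh
    have := hz (i + 1) (by omega)
    omega
  have hle : r (i + 1) ≤ r i := ha (by omega)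
  have hmem : r (i + 1) ∈ toB n r := mem_toB.2 ⟨⟨i + 1, hin, rfl⟩, by omega⟩
  have hmem' : r i ∈ toB n r := mem_toB.2 ⟨⟨i, by omega, rfl⟩, by omega⟩
  by_contra hcon
  have h := hB _ hmem (Nat.odd_iff.2 ho) (r i) hle (by omega)
  split_ifs at h with heq
  · rw [count_toB (by omega), Finset.card_le_one] at h
    have := h i (by simp; omega) (i + 1) (by simp [heq]; omega)
    omega
  · have := Multiset.count_pos.2 hmem'
    omega

/-! ### Sequences and the intermediate class -/

/-- multiplicity of `2 i` -/
def ee (k : ℕ) (r : ℕ → ℕ) : ℕ → ℕ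
  | 0 => 0
  | i + 1 => r i / 2 - r (i + 1) / 2 - k * (r (i + 1) % 2)

theorem ee_succ (k : ℕ) (r : ℕ → ℕ) (i : ℕ) :
    ee k r (i + 1) = r i / 2 - r (i + 1) / 2 - k * (r (i + 1) % 2) := rfl

def toM (k n : ℕ) (r : ℕ → ℕ) : Multiset ℕ :=
  ∑ i ∈ Finset.range (n + 1), (Multiset.replicate (r i % 2) (2 * k * i + 1)
    + Multiset.replicate (ee k r i) (2 * i))

theorem toM_sum_aux (k : ℕ) (r : ℕ → ℕ) (ha : Antitone r)
    (hc : ∀ i, r (i + 1) % 2 = 1 → r (i + 1) / 2 + k ≤ r i / 2) (n : ℕ) :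
    (toM k n r).sum + 2 * n * (r n / 2) = ∑ i ∈ Finset.range n, r i + r n % 2 := by
  induction n with
  | zero => simp [toM, ee]
  | succ n ih =>
    have h1 : (toM k (n + 1) r).sum = (toM k n r).sum +
        ((r (n + 1) % 2) * (2 * k * (n + 1) + 1) + ee k r (n + 1) * (2 * (n + 1))) := by
      unfold toM
      rw [Finset.sum_range_succ _ (n + 1), Multiset.sum_add, Multiset.sum_add,
        Multiset.sum_replicate, Multiset.sum_replicate]
      simp
    have h2 : ee k r (n + 1) + r (n + 1) / 2 + k * (r (n + 1) % 2) = r n / 2 := by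
      have hle : r (n + 1) ≤ r n := ha (by omega)
      have := hc n
      rw [ee_succ]
      rcases Nat.mod_two_eq_zero_or_one (r (n + 1)) with h | h
      · rw [h, mul_zero]; omega
      · have := hc n h
        rw [h, mul_one]; omega
    have h3 : r n = 2 * (r n / 2) + r n % 2 := by omega
    rw [h1, Finset.sum_range_succ]
    generalize (toM k n r).sum = A at *
    generalize ∑ i ∈ Finset.range n, r i = B at *
    generalize ee k r (n + 1) = e at *
    generalize r (n + 1) / 2 = m' at *
    generalize r (n + 1) % 2 = s' at *
    rw [h3]
    have h4 : r n / 2 = e + m' + k * s' := h2.symm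
    generalize r n % 2 = s at *
    rw [← h2] at ih ⊢
    linear_combination ih

theorem ee_zero {k n : ℕ} {r : ℕ → ℕ} (hz : ∀ i, n ≤ i → r i = 0) {i : ℕ} (hi : n < i) :
    ee k r i = 0 := by
  obtain ⟨j, rfl⟩ : ∃ j, i = j + 1 := ⟨i - 1, by omega⟩
  rw [ee_succ]
  rw [hz j (by omega)]
  simp

theorem count_even_toM {k n : ℕ} {r : ℕ → ℕ} (hz : ∀ i, n ≤ i → r i = 0) (i : ℕ) :
    (toM k n r).count (2 * i) = ee k r i := by
  unfold toM
  rw [Multiset.count_sum']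
  simp only [Multiset.count_add, Multiset.count_replicate]
  have : ∀ j ∈ Finset.range (n + 1), ((if 2 * k * j + 1 = 2 * i then r j % 2 else 0) +
      if 2 * j = 2 * i then ee k r j else 0) = if j = i then ee k r j else 0 := by
    intro j _
    have h1 : ¬ (2 * k * j + 1 = 2 * i) := by
      rw [mul_assoc]; omega
    rw [if_neg h1, zero_add]
    congr 1
    simp
  rw [Finset.sum_congr rfl this, Finset.sum_ite_eq']
  split_ifs with h
  · rfl
  · rw [ee_zero hz]; simpa using h

theorem count_odd_toM {k n : ℕ} (hk : 2 ≤ k) {r : ℕ → ℕ} (hz : ∀ i, n ≤ i → r i = 0) (i : ℕ) :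
    (toM k n r).count (2 * k * i + 1) = r i % 2 := by
  unfold toM
  rw [Multiset.count_sum']
  simp only [Multiset.count_add, Multiset.count_replicate]
  have : ∀ j ∈ Finset.range (n + 1), ((if 2 * k * j + 1 = 2 * k * i + 1 then r j % 2 else 0) +
      if 2 * j = 2 * k * i + 1 then ee k r j else 0) = if j = i then r j % 2 else 0 := by
    intro j _
    have h1 : ¬ (2 * j = 2 * k * i + 1) := by
      rw [mul_assoc]; omega
    rw [if_neg h1, add_zero]
    congr 1
    have : k ≠ 0 := by omega
    simp [this]
  rw [Finset.sum_congr rfl this, Finset.sum_ite_eq']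
  split_ifs with h
  · rfl
  · have : ¬ (i < n + 1) := by simpa using h
    rw [hz i (by omega), Nat.zero_mod]

theorem odd_mem_toM {k n : ℕ} {r : ℕ → ℕ} {c : ℕ} (hc : c ∈ toM k n r) (ho : c % 2 = 1) :
    ∃ i, c = 2 * k * i + 1 := by
  unfold toM at hc
  rw [Multiset.mem_sum] at hc
  obtain ⟨i, -, hi⟩ := hc
  rw [Multiset.mem_add] at hi
  rcases hi with hi | hi
  · exact ⟨i, Multiset.eq_of_mem_replicate hi⟩
  · have := Multiset.eq_of_mem_replicate hi
    omega

theorem toM_bijOn (k n : ℕ) (hk : 2 ≤ k) :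
    Set.BijOn (toM k n) (SeqT k n) {m | IsPart n m ∧ CondM k m} := by
  refine ⟨?_, ?_, ?_⟩
  · rintro r ⟨ha, hz, hs, hc⟩
    refine ⟨⟨?_, ?_⟩, ?_⟩
    · have := count_even_toM (k := k) hz 0
      rw [← Multiset.count_eq_zero]
      exact this
    · have := toM_sum_aux k r ha hc n
      rw [hs, hz n le_rfl] at this
      simpa using this
    · intro c hcm ho
      obtain ⟨i, rfl⟩ := odd_mem_toM hcm (Nat.odd_iff.1 ho)
      refine ⟨?_, ?_⟩
      · rw [Nat.mul_add_mod]
        exact Nat.mod_eq_of_lt (by omega)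
      · rw [count_odd_toM hk hz]; omega
  · rintro r ⟨ha, hz, hs, hc⟩ r' ⟨ha', hz', hs', hc'⟩ h
    have h1 : ∀ i, r i % 2 = r' i % 2 := fun i => by
      rw [← count_odd_toM hk hz, h, count_odd_toM hk hz']
    have h2 : ∀ i, ee k r i = ee k r' i := fun i => by
      rw [← count_even_toM hz, h, count_even_toM hz']
    have h3 : ∀ j, j ≤ n → r (n - j) = r' (n - j) := by
      intro j
      induction j with
      | zero => intro _; rw [hz _ (by omega), hz' _ (by omega)]
      | succ j ih =>
        intro hj
        have ih := ih (by omega)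
        obtain ⟨i, hi⟩ : ∃ i, n - j = i + 1 := ⟨n - j - 1, by omega⟩
        have hi' : n - (j + 1) = i := by omega
        rw [hi] at ih
        rw [hi']
        have e := h2 (i + 1)
        rw [ee_succ, ee_succ] at e
        have p := h1 i
        have c1 := hc i
        have c2 := hc' i
        have a1 : r (i + 1) ≤ r i := ha (by omega)
        have a2 : r' (i + 1) ≤ r' i := ha' (by omega)
        rcases Nat.mod_two_eq_zero_or_one (r (i + 1)) with q | q
        · rw [← ih, q] at e
          omega
        · have c1 := c1 q
          have c2 := c2 (by omega)
          rw [← ih, q] at e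
          omega
    funext i
    by_cases hi : i ≤ n
    · have := h3 (n - i) (by omega)
      rwa [show n - (n - i) = i by omega] at this
    · rw [hz _ (by omega), hz' _ (by omega)]
  · rintro P ⟨hP, hM⟩
    obtain ⟨s, hs⟩ : ∃ s : ℕ → ℕ, ∀ i, s i = P.count (2 * k * i + 1) := ⟨_, fun _ => rfl⟩
    obtain ⟨e, he⟩ : ∃ e : ℕ → ℕ, ∀ i, e i = P.count (2 * i) := ⟨_, fun _ => rfl⟩
    obtain ⟨M, hMdef⟩ : ∃ M : ℕ → ℕ, ∀ i, M i = ∑ j ∈ Finset.Ico (i + 1) (n + 1), (e j + k * s j) :=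
      ⟨_, fun _ => rfl⟩
    have hs1 : ∀ i, s i ≤ 1 := by
      intro i
      rw [hs]
      by_cases hm : 2 * k * i + 1 ∈ P
      · exact (hM _ hm (by rw [Nat.odd_iff, mul_assoc]; omega)).2
      · rw [Multiset.count_eq_zero.2 hm]; omega
    have hs0 : ∀ i, n ≤ i → s i = 0 := by
      intro i hi
      rw [hs]
      apply count_zero_of_lt hP
      nlinarith
    have he0 : ∀ i, n < i → e i = 0 := by
      intro i hi
      rw [he]
      exact count_zero_of_lt hP (by omega)
    have hM0 : ∀ i, n ≤ i → M i = 0 := by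
      intro i hi
      rw [hMdef, Finset.Ico_eq_empty (by omega)]; rfl
    have hM1 : ∀ i, M i = e (i + 1) + k * s (i + 1) + M (i + 1) := by
      intro i
      by_cases hi : n ≤ i
      · rw [hM0 _ hi, hM0 _ (by omega), he0 _ (by omega), hs0 _ (by omega)]; simp
      · rw [hMdef, hMdef, Finset.sum_eq_sum_Ico_succ_bot (by omega)]
    obtain ⟨r, hr⟩ : ∃ r : ℕ → ℕ, ∀ i, r i = 2 * M i + s i := ⟨_, fun _ => rfl⟩
    have hr2 : ∀ i, r i / 2 = M i := fun i => by have := hs1 i; have := hr i; omega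
    have hrm : ∀ i, r i % 2 = s i := fun i => by have := hs1 i; have := hr i; omega
    have hz : ∀ i, n ≤ i → r i = 0 := fun i hi => by rw [hr, hM0 _ hi, hs0 _ hi]
    have hc : ∀ i, r (i + 1) % 2 = 1 → r (i + 1) / 2 + k ≤ r i / 2 := by
      intro i h
      rw [hrm] at h
      rw [hr2, hr2, hM1 i, h]
      omega
    have ha : Antitone r := by
      apply antitone_nat_of_succ_le
      intro i
      have h1 := hM1 i
      have h2 := hs1 (i + 1)
      rw [hr, hr]
      rcases Nat.le_one_iff_eq_zero_or_eq_one.1 h2 with h | h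
      · rw [h] at h1 ⊢; omega
      · rw [h] at h1 ⊢; omega
    have heq : toM k n r = P := by
      ext c
      rcases Nat.mod_two_eq_zero_or_one c with h | h
      · obtain ⟨i, rfl⟩ : ∃ i, c = 2 * i := ⟨c / 2, by omega⟩
        rw [count_even_toM hz]
        cases i with
        | zero =>
          symm
          simp only [ee, mul_zero]
          exact Multiset.count_eq_zero.2 hP.1
        | succ i =>
          rw [ee_succ]
          rw [hr2, hr2, hrm, hM1 i, ← he]
          omega
      · by_cases hmod : c % (2 * k) = 1
        · have : c = 2 * k * (c / (2 * k)) + 1 := by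
            have := Nat.div_add_mod c (2 * k); omega
          rw [this, count_odd_toM hk hz, hrm, hs]
        · rw [Multiset.count_eq_zero.2, Multiset.count_eq_zero.2]
          · intro hm
            exact hmod (hM c hm (Nat.odd_iff.2 h)).1
          · intro hm
            obtain ⟨i, rfl⟩ := odd_mem_toM hm h
            apply hmod
            rw [Nat.mul_add_mod]
            exact Nat.mod_eq_of_lt (by omega)
    refine ⟨r, ⟨ha, hz, ?_, hc⟩, heq⟩
    have := toM_sum_aux k r ha hc n
    rw [heq, hP.2, hz n le_rfl] at this
    simpa using this.symm

/-! ### The intermediate class and class one -/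

def toA (k : ℕ) (P : Multiset ℕ) : Multiset ℕ :=
  P.filter (fun c => ¬ c % (4 * k) = 2) + 2 • (P.filter (fun c => c % (4 * k) = 2)).map (· / 2)

theorem arith1 {k : ℕ} (a : ℕ) (h : a % (4 * k) = 2) :
    a % 2 = 0 ∧ (a / 2) % (2 * k) = 1 := by
  have h0 : a % 2 = 0 := by
    have := Nat.mod_mod_of_dvd a (show 2 ∣ 4 * k from ⟨2 * k, by ring⟩)
    rw [h] at this
    omega
  refine ⟨h0, ?_⟩
  obtain ⟨b, rfl⟩ : ∃ b, a = 2 * b := ⟨a / 2, by omega⟩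
  rw [show 4 * k = 2 * (2 * k) by ring, Nat.mul_mod_mul_left] at h
  rw [show 2 * b / 2 = b by omega]
  omega

theorem arith2 {k : ℕ} (c : ℕ) (h : c % (2 * k) = 1) :
    (2 * c) % (4 * k) = 2 ∧ c % 2 = 1 := by
  constructor
  · rw [show 4 * k = 2 * (2 * k) by ring, Nat.mul_mod_mul_left, h]
  · have := Nat.mod_mod_of_dvd c (show 2 ∣ 2 * k from ⟨k, rfl⟩)
    rw [h] at this
    omega

theorem arith3 {k : ℕ} (hk : 2 ≤ k) (c : ℕ) :
    (c % (4 * k) = 1 ∨ c % (4 * k) = 2 * k + 1) ↔ c % (2 * k) = 1 := by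
  have h1 := Nat.mod_mod_of_dvd c (show 2 * k ∣ 4 * k from ⟨2, by ring⟩)
  have h2 : c % (4 * k) < 4 * k := Nat.mod_lt _ (by omega)
  rw [← h1]
  generalize c % (4 * k) = x at *
  by_cases hx : x < 2 * k
  · rw [Nat.mod_eq_of_lt hx]; omega
  · rw [Nat.mod_eq_sub_mod (by omega), Nat.mod_eq_of_lt (by omega)]; omega

theorem toA_sum (k : ℕ) (P : Multiset ℕ) : (toA k P).sum = P.sum := by
  unfold toA
  induction P using Multiset.induction_on with
  | empty => simp
  | cons a P ih =>
    simp only [Multiset.sum_add, Multiset.sum_nsmul, smul_eq_mul] at ih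
    by_cases h : a % (4 * k) = 2
    · have := (arith1 a h).1
      rw [Multiset.filter_cons_of_neg (p := fun c => ¬ c % (4 * k) = 2) _ (by simpa using h), Multiset.filter_cons_of_pos (p := fun c => c % (4 * k) = 2) _ h]
      simp only [Multiset.sum_add, Multiset.sum_nsmul, smul_eq_mul, Multiset.map_cons,
        Multiset.sum_cons]
      omega
    · rw [Multiset.filter_cons_of_pos (p := fun c => ¬ c % (4 * k) = 2) _ h,
        Multiset.filter_cons_of_neg (p := fun c => c % (4 * k) = 2) _ h]
      simp only [Multiset.sum_add, Multiset.sum_nsmul, smul_eq_mul, Multiset.sum_cons]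
      omega

theorem count_half (k : ℕ) (P : Multiset ℕ) (c : ℕ) :
    ((P.filter (fun c => c % (4 * k) = 2)).map (· / 2)).count c =
      if c % (2 * k) = 1 then P.count (2 * c) else 0 := by
  induction P using Multiset.induction_on with
  | empty => simp
  | cons a P ih =>
    by_cases h : a % (4 * k) = 2
    · obtain ⟨h1, h2⟩ := arith1 a h
      rw [Multiset.filter_cons_of_pos (p := fun c => c % (4 * k) = 2) _ h, Multiset.map_cons, Multiset.count_cons,
        Multiset.count_cons, ih]
      by_cases hc : c % (2 * k) = 1
      · rw [if_pos hc, if_pos hc]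
        congr 1
        apply if_congr _ rfl rfl
        omega
      · rw [if_neg hc, if_neg hc, if_neg]
        rintro rfl
        exact hc h2
    · rw [Multiset.filter_cons_of_neg (p := fun c => c % (4 * k) = 2) _ h, ih, Multiset.count_cons]
      by_cases hc : c % (2 * k) = 1
      · rw [if_pos hc, if_pos hc, if_neg, add_zero]
        rintro rfl
        exact h (arith2 c hc).1
      · rw [if_neg hc, if_neg hc]

theorem count_toA (k : ℕ) (P : Multiset ℕ) (c : ℕ) :
    (toA k P).count c = (if c % (4 * k) = 2 then 0 else P.count c) +
      2 * (if c % (2 * k) = 1 then P.count (2 * c) else 0) := by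
  unfold toA
  rw [Multiset.count_add, Multiset.count_nsmul, count_half, Multiset.count_filter]
  congr 1
  split_ifs <;> simp_all

theorem not_both {k c : ℕ} (h : c % (2 * k) = 1) : ¬ c % (4 * k) = 2 := fun h' => by
  have := (arith1 c h').1
  have := (arith2 c h).2
  omega

theorem toA_bijOn (k n : ℕ) (hk : 2 ≤ k) :
    Set.BijOn (toA k) {m | IsPart n m ∧ CondM k m} {m | IsPart n m ∧ CondA k m} := by
  have zero1 : ¬ 0 % (2 * k) = 1 := by simp
  have zero2 : ¬ 0 % (4 * k) = 2 := by simp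
  refine ⟨?_, ?_, ?_⟩
  · rintro P ⟨hP, hM⟩
    refine ⟨⟨?_, by rw [toA_sum, hP.2]⟩, ?_⟩
    · rw [← Multiset.count_eq_zero, count_toA, if_neg zero1, if_neg zero2,
        Multiset.count_eq_zero.2 hP.1]
    · intro c hc
      have hpos := Multiset.count_pos.2 hc
      rw [count_toA] at hpos
      rw [arith3 hk]
      by_cases h1 : c % (2 * k) = 1
      · exact Or.inr ⟨Nat.odd_iff.2 (arith2 c h1).2, h1⟩
      · rw [if_neg h1] at hpos
        by_cases h2 : c % (4 * k) = 2
        · rw [if_pos h2] at hpos; omega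
        · rw [if_neg h2] at hpos
          have hcP : c ∈ P := Multiset.count_pos.1 (by omega)
          rcases Nat.even_or_odd c with h | h
          · exact Or.inl ⟨h, h2⟩
          · exact absurd (hM c hcP h).1 h1
  · rintro P ⟨hP, hM⟩ P' ⟨hP', hM'⟩ h
    have bound : ∀ Q : Multiset ℕ, CondM k Q → ∀ c, c % (2 * k) = 1 → Q.count c ≤ 1 := by
      intro Q hQ c hc
      by_cases hm : c ∈ Q
      · exact (hQ c hm (Nat.odd_iff.2 (arith2 c hc).2)).2
      · rw [Multiset.count_eq_zero.2 hm]; omega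
    have main : ∀ c, c % (2 * k) = 1 →
        P.count c = P'.count c ∧ P.count (2 * c) = P'.count (2 * c) := by
      intro c hc
      have e := congrArg (Multiset.count c) h
      rw [count_toA, count_toA, if_neg (not_both hc), if_pos hc, if_neg (not_both hc),
        if_pos hc] at e
      have := bound P hM c hc
      have := bound P' hM' c hc
      omega
    ext c
    by_cases h1 : c % (2 * k) = 1
    · exact (main c h1).1
    · by_cases h2 : c % (4 * k) = 2
      · obtain ⟨h3, h4⟩ := arith1 c h2
        have := (main _ h4).2
        rwa [show 2 * (c / 2) = c by omega] at this
      · have e := congrArg (Multiset.count c) h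
        rw [count_toA, count_toA, if_neg h1, if_neg h2, if_neg h1, if_neg h2] at e
        omega
  · rintro Q ⟨hQ, hA⟩
    obtain ⟨g, hg⟩ : ∃ g : ℕ → ℕ, ∀ c, g c = if c % (4 * k) = 2 then Q.count (c / 2) / 2 else
      if c % (2 * k) = 1 then Q.count c % 2 else Q.count c := ⟨_, fun _ => rfl⟩
    have hg0 : ∀ c, 2 * n + 2 ≤ c → g c = 0 := by
      intro c hc
      rw [hg, count_zero_of_lt hQ (show n < c by omega),
        count_zero_of_lt hQ (show n < c / 2 by omega)]
      simp
    have hcount := count_ofCount _ g hg0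
    set P := ofCount (2 * n + 2) g with hPdef
    have heq : toA k P = Q := by
      ext c
      rw [count_toA, hcount, hcount]
      by_cases h1 : c % (2 * k) = 1
      · rw [if_neg (not_both h1), if_pos h1, hg, hg, if_neg (not_both h1), if_pos h1,
          if_pos (arith2 c h1).1, show 2 * c / 2 = c by omega]
        omega
      · rw [if_neg h1]
        by_cases h2 : c % (4 * k) = 2
        · rw [if_pos h2]
          symm
          rw [mul_zero, add_zero, Multiset.count_eq_zero]
          intro hm
          have := (arith1 c h2).1
          rcases hA c hm with h | h
          · exact h.2 h2
          · have := Nat.odd_iff.1 h.1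
            omega
        · rw [if_neg h2, hg, if_neg h2, if_neg h1]; omega
    refine ⟨P, ⟨⟨?_, by rw [← toA_sum k, heq, hQ.2]⟩, ?_⟩, heq⟩
    · rw [← Multiset.count_eq_zero, hcount, hg, if_neg zero2, if_neg zero1,
        Multiset.count_eq_zero.2 hQ.1]
    · intro c hc ho
      have hpos := Multiset.count_pos.2 hc
      rw [hcount] at hpos ⊢
      rw [hg] at hpos ⊢
      have ho' := Nat.odd_iff.1 ho
      have h2 : ¬ c % (4 * k) = 2 := fun h => by
        have := (arith1 c h).1
        omega
      rw [if_neg h2] at hpos ⊢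
      by_cases h1 : c % (2 * k) = 1
      · rw [if_pos h1]
        exact ⟨h1, by omega⟩
      · rw [if_neg h1] at hpos
        rcases hA c (Multiset.count_pos.1 hpos) with h | h
        · have := Nat.even_iff.1 h.1
          omega
        · exact absurd ((arith3 hk c).1 h.2) h1

end DualAndrews

/-- Dual of Andrews's family of identities.
For `k ≥ 2`, partitions of `n` whose parts are even and `≢ 2 (mod 4k)`,
or odd and `≡ 1` or `2k+1 (mod 4k)`, are equinumerous with partitions of `n`
in which an odd part `b = 2j+1` forbids any other part in
`{2j+1, 2j+2, …, 2j+2k−1}`. -/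
theorem dual_andrews_identity (k : ℕ) (hk : 2 ≤ k) (n : ℕ) :
    Nat.card {p : Nat.Partition n //
      ∀ c ∈ p.parts, (Even c ∧ c % (4 * k) ≠ 2) ∨
        (Odd c ∧ (c % (4 * k) = 1 ∨ c % (4 * k) = 2 * k + 1))} =
    Nat.card {p : Nat.Partition n //
      ∀ b ∈ p.parts, Odd b → ∀ c : ℕ, b ≤ c → c + 2 ≤ b + 2 * k →
        Multiset.count c p.parts ≤ if c = b then 1 else 0} := by
  have e1 := DualAndrews.card_partition n (DualAndrews.CondA k)
  have e2 := DualAndrews.card_partition n (DualAndrews.CondB k)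
  have b1 := Nat.card_congr (DualAndrews.toA_bijOn k n hk).equiv
  have b2 := Nat.card_congr (DualAndrews.toM_bijOn k n hk).equiv
  have b3 := Nat.card_congr (DualAndrews.toB_bijOn k n hk).equiv
  exact e1.trans (b1.symm.trans (b2.symm.trans (b3.trans e2.symm)))
end

section
/- For integers k ≥ 2 and 0 ≤ i ≤ k−1, and every non-negative integer n: the number of partitions of n in which each part is either even but not congruent to 4i+2 modulo 4k, or odd and congruent to 2i+1 or 2k+2i+1 modulo 4k, equals the number of partitions of n in which, whenever an odd part 2j+1 appears, no other even part equals any of 2j−2i+2, 2j−2i+4, ..., 2j+2k−2i−2, no other odd part equals any of 2j+1, 2j+3, ..., 2j+2k−1, and every odd part is at least 2i+1. -/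
namespace AndrewsInterp

/-- Normalised difference condition (the case `i = 0`, zero parts allowed). -/
def Good (k : ℕ) (M : Multiset ℕ) : Prop :=
  ∀ b ∈ M, Odd b → (∀ c ∈ M, Even c → b + 1 ≤ c → c + 3 ≤ b + 2 * k → False) ∧
    M.count b ≤ 1 ∧ (∀ c ∈ M, Odd c → b < c → b + 2 * k ≤ c)

/-- Weight of a normalised configuration. -/
def wt (i : ℕ) (M : Multiset ℕ) : ℕ := (M.map (fun c => if Odd c then c + 2 * i else c)).sum

/-- Configurations with `N` parts and weight `w - d`. -/
def C (k i N d w : ℕ) : Set (Multiset ℕ) := {M | M.card = N ∧ Good k M ∧ wt i M + d = w}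

/-- The common counting function. -/
def cnt (k i : ℕ) : ℕ → ℕ → ℕ
  | 0, w => if w = 0 then 1 else 0
  | N + 1, w => cnt k i N w
      + (if 2 * i + 1 + 2 * k * N ≤ w then cnt k i N (w - (2 * i + 1 + 2 * k * N)) else 0)
      + (if 2 * (N + 1) ≤ w then cnt k i (N + 1) (w - 2 * (N + 1)) else 0)
termination_by N w => (N, w)

theorem add_inj (s : ℕ) : Function.Injective (fun x : ℕ => x + s) := fun a b h => by
  simpa using h

theorem good_shift (k s : ℕ) (M : Multiset ℕ) :
    Good k (M.map (fun x => x + 2 * s)) ↔ Good k M := by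
  have hc : ∀ b, (M.map (fun x => x + 2 * s)).count (b + 2 * s) = M.count b := fun b =>
    Multiset.count_map_eq_count' (fun x => x + 2 * s) M (add_inj _) b
  have ho : ∀ b, Odd (b + 2 * s) ↔ Odd b := by intro b; grind
  have he : ∀ b, Even (b + 2 * s) ↔ Even b := by intro b; grind
  simp only [Good, Multiset.mem_map, forall_exists_index, and_imp, forall_apply_eq_imp_iff₂, ho, he,
    hc]
  constructor
  · intro h b hb hbo
    obtain ⟨h1, h2, h3⟩ := h b hb hbo
    exact ⟨fun c hcm hce x y => h1 c hcm hce (by omega) (by omega), h2,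
      fun c hcm hco x => by have := h3 c hcm hco (by omega); omega⟩
  · intro h b hb hbo
    obtain ⟨h1, h2, h3⟩ := h b hb hbo
    exact ⟨fun c hcm hce x y => h1 c hcm hce (by omega) (by omega), h2,
      fun c hcm hco x => by have := h3 c hcm hco (by omega); omega⟩

theorem good_cons0 (k : ℕ) (M : Multiset ℕ) : Good k (0 ::ₘ M) ↔ Good k M := by
  constructor
  · intro h b hb hbo
    obtain ⟨h1, h2, h3⟩ := h b (Multiset.mem_cons_of_mem hb) hbo
    refine ⟨fun c hc => h1 c (Multiset.mem_cons_of_mem hc), ?_,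
      fun c hc => h3 c (Multiset.mem_cons_of_mem hc)⟩
    exact (Multiset.count_le_count_cons _ _ _).trans h2
  · intro h b hb hbo
    have hb0 : b ≠ 0 := by rintro rfl; simp at hbo
    have hb' : b ∈ M := by simpa [hb0] using hb
    obtain ⟨h1, h2, h3⟩ := h b hb' hbo
    refine ⟨?_, by rwa [Multiset.count_cons_of_ne hb0], ?_⟩
    · intro c hc hce x y
      rcases Multiset.mem_cons.1 hc with rfl | hc
      · omega
      · exact h1 c hc hce x y
    · intro c hc hce x
      rcases Multiset.mem_cons.1 hc with rfl | hc
      · omega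
      · exact h3 c hc hce x

theorem good_cons1 (k : ℕ) (hk : 1 ≤ k) (M : Multiset ℕ) :
    Good k (1 ::ₘ M.map (fun x => x + 2 * k)) ↔ Good k M := by
  rw [← good_shift k k M]
  set P := M.map (fun x => x + 2 * k) with hP
  have hP' : ∀ x ∈ P, 2 * k ≤ x := by
    intro x hx; rw [hP, Multiset.mem_map] at hx; obtain ⟨y, _, rfl⟩ := hx; omega
  constructor
  · intro h b hb hbo
    obtain ⟨h1, h2, h3⟩ := h b (Multiset.mem_cons_of_mem hb) hbo
    refine ⟨fun c hc => h1 c (Multiset.mem_cons_of_mem hc), ?_,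
      fun c hc => h3 c (Multiset.mem_cons_of_mem hc)⟩
    exact (Multiset.count_le_count_cons _ _ _).trans h2
  · intro h b hb hbo
    rcases Multiset.mem_cons.1 hb with rfl | hb
    · refine ⟨?_, ?_, ?_⟩
      · intro c hc hce x y
        rcases Multiset.mem_cons.1 hc with rfl | hc
        · omega
        · have := hP' c hc; omega
      · rw [Multiset.count_cons_self, Multiset.count_eq_zero_of_notMem]
        intro h1; have := hP' 1 h1; omega
      · intro c hc hce x
        rcases Multiset.mem_cons.1 hc with rfl | hc
        · omega
        · have := hP' c hc; rw [Nat.odd_iff] at hce; omega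
    · have := hP' b hb
      obtain ⟨h1, h2, h3⟩ := h b hb hbo
      refine ⟨?_, by rwa [Multiset.count_cons_of_ne (by omega)], ?_⟩
      · intro c hc hce x y
        rcases Multiset.mem_cons.1 hc with rfl | hc
        · omega
        · exact h1 c hc hce x y
      · intro c hc hce x
        rcases Multiset.mem_cons.1 hc with rfl | hc
        · omega
        · exact h3 c hc hce x

theorem wt_shift (i s : ℕ) (M : Multiset ℕ) :
    wt i (M.map (fun x => x + 2 * s)) = wt i M + 2 * s * M.card := by
  induction M using Multiset.induction_on with
  | empty => simp [wt]
  | cons a M ih =>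
    simp only [wt, Multiset.map_cons, Multiset.sum_cons, Multiset.card_cons] at ih ⊢
    rw [ih]
    have ho : Odd (a + 2 * s) ↔ Odd a := by grind
    simp only [ho]
    split_ifs <;> ring

theorem wt_cons0 (i : ℕ) (M : Multiset ℕ) : wt i (0 ::ₘ M) = wt i M := by simp [wt]

theorem wt_cons1 (i : ℕ) (M : Multiset ℕ) : wt i (1 ::ₘ M) = 2 * i + 1 + wt i M := by
  simp [wt]; ring

theorem exists_shift (s : ℕ) (M : Multiset ℕ) (h : ∀ x ∈ M, 2 * s ≤ x) :
    ∃ P : Multiset ℕ, P.map (fun x => x + 2 * s) = M := by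
  refine ⟨M.map (fun x => x - 2 * s), ?_⟩
  rw [Multiset.map_map]
  conv_rhs => rw [← Multiset.map_id M]
  apply Multiset.map_congr rfl
  intro x hx
  have := h x hx
  simp only [Function.comp, id]; omega

theorem C_succ (k i N w : ℕ) (hk : 1 ≤ k) :
    C k i (N + 1) 0 w = (fun M => 0 ::ₘ M) '' C k i N 0 w ∪
      ((fun M : Multiset ℕ => 1 ::ₘ M.map (fun x => x + 2 * k)) ''
          C k i N (2 * i + 1 + 2 * k * N) w ∪
        (fun M : Multiset ℕ => M.map (fun x => x + 2 * 1)) '' C k i (N + 1) (2 * (N + 1)) w) := by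
  ext M
  simp only [Set.mem_union, Set.mem_image]
  constructor
  · rintro ⟨h1, h2, h3⟩
    by_cases h0 : 0 ∈ M
    · left
      obtain ⟨P, rfl⟩ := Multiset.exists_cons_of_mem h0
      refine ⟨P, ⟨by simpa using h1, (good_cons0 k P).1 h2, by rwa [wt_cons0] at h3⟩, rfl⟩
    · right
      by_cases h1' : 1 ∈ M
      · left
        obtain ⟨Q, rfl⟩ := Multiset.exists_cons_of_mem h1'
        obtain ⟨g1, g2, g3⟩ := h2 1 h1' odd_one
        obtain ⟨P, rfl⟩ := exists_shift k Q (by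
          intro x hx
          have hx0 : x ≠ 0 := by rintro rfl; exact h0 (Multiset.mem_cons_of_mem hx)
          have hx1 : x ≠ 1 := by
            rintro rfl
            rw [Multiset.count_cons_self] at g2
            have := Multiset.count_pos.2 hx
            omega
          rcases Nat.even_or_odd x with he | ho
          · have := g1 x (Multiset.mem_cons_of_mem hx) he
            rw [Nat.even_iff] at he
            by_contra hlt
            exact this (by omega) (by omega)
          · have := g3 x (Multiset.mem_cons_of_mem hx) ho (by omega)
            omega)
        have hcard : P.card = N := by simpa using h1
        refine ⟨P, ⟨hcard, (good_cons1 k hk P).1 h2, ?_⟩, rfl⟩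
        rw [wt_cons1, wt_shift, hcard] at h3
        omega
      · right
        obtain ⟨P, rfl⟩ := exists_shift 1 M (by
          intro x hx
          have hx0 : x ≠ 0 := by rintro rfl; exact h0 hx
          have hx1 : x ≠ 1 := by rintro rfl; exact h1' hx
          omega)
        have hcard : P.card = N + 1 := by simpa using h1
        refine ⟨P, ⟨hcard, (good_shift k 1 P).1 h2, ?_⟩, rfl⟩
        rw [wt_shift, hcard] at h3
        omega
  · rintro (⟨P, ⟨h1, h2, h3⟩, rfl⟩ | ⟨P, ⟨h1, h2, h3⟩, rfl⟩ | ⟨P, ⟨h1, h2, h3⟩, rfl⟩)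
    · exact ⟨by simp [h1], (good_cons0 k P).2 h2, by rwa [wt_cons0]⟩
    · refine ⟨by simp [h1], (good_cons1 k hk P).2 h2, ?_⟩
      rw [wt_cons1, wt_shift, h1]; omega
    · refine ⟨by simp [h1], (good_shift k 1 P).2 h2, ?_⟩
      rw [wt_shift, h1]; omega

theorem C_shift (k i N d w : ℕ) : C k i N d w = if d ≤ w then C k i N 0 (w - d) else ∅ := by
  split_ifs with h
  · ext M
    simp only [C, Set.mem_ofPred_eq]
    have : wt i M + d = w ↔ wt i M + 0 = w - d := by omega
    rw [this]
  · ext M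
    simp only [C, Set.mem_ofPred_eq, Set.mem_empty_iff_false, iff_false]
    rintro ⟨_, _, h3⟩; omega

theorem encard_C (k i : ℕ) (hk : 1 ≤ k) (N w : ℕ) : (C k i N 0 w).encard = cnt k i N w := by
  induction N generalizing w with
  | zero =>
    have h0 : C k i 0 0 w = if w = 0 then {0} else ∅ := by
      ext M
      simp only [C, Set.mem_ofPred_eq, Multiset.card_eq_zero]
      split_ifs with h
      · simp only [Set.mem_singleton_iff]
        constructor
        · exact fun h => h.1
        · rintro rfl; exact ⟨rfl, by intro b hb; simp at hb, by simp [wt, h]⟩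
      · simp only [Set.mem_empty_iff_false, iff_false]
        rintro ⟨rfl, _, h3⟩
        simp [wt] at h3; exact h h3.symm
    rw [h0, cnt]
    split_ifs <;> simp
  | succ N ih1 =>
    induction w using Nat.strong_induction_on with
    | _ w ih3 =>
    rw [C_succ k i N w hk, Set.encard_union_eq, Set.encard_union_eq,
      Function.Injective.encard_image, Function.Injective.encard_image,
      Function.Injective.encard_image, ih1, C_shift k i N, C_shift k i (N + 1), cnt]
    · push_cast
      rw [← add_assoc]
      congr 1
      · congr 1
        split_ifs with h
        · exact ih1 _
        · simp
      · split_ifs with h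
        · exact ih3 _ (by omega)
        · simp
    · exact Multiset.map_injective (add_inj _)
    · intro P Q h
      exact Multiset.map_injective (add_inj _) ((Multiset.cons_inj_right 1).1 h)
    · intro P Q h
      exact (Multiset.cons_inj_right 0).1 h
    · rw [Set.disjoint_left]
      rintro _ ⟨P, _, rfl⟩ ⟨Q, _, h⟩
      have : 1 ∈ Q.map (fun x => x + 2 * 1) := by simp only at h; rw [h]; simp
      simp at this
    · rw [Set.disjoint_left]
      rintro _ ⟨P, _, rfl⟩ (⟨Q, _, h⟩ | ⟨Q, _, h⟩)
      · have : 0 ∈ 1 ::ₘ Q.map (fun x => x + 2 * k) := by simp only at h; rw [h]; simp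
        simp at this; omega
      · have : 0 ∈ Q.map (fun x => x + 2 * 1) := by simp only at h; rw [h]; simp
        simp at this

open PowerSeries in
theorem mk_cnt (k i N : ℕ) :
    (PowerSeries.mk fun w => (cnt k i N w : ℤ)) *
        ∏ m ∈ Finset.range N, (1 - (X : ℤ⟦X⟧) ^ (2 * (m + 1))) =
      ∏ j ∈ Finset.range N, (1 + (X : ℤ⟦X⟧) ^ (2 * i + 1 + 2 * k * j)) := by
  induction N with
  | zero =>
    ext w
    simp [cnt, coeff_one]
  | succ N ih =>
    rw [Finset.prod_range_succ, Finset.prod_range_succ, ← ih]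
    have key : (PowerSeries.mk fun w => (cnt k i (N + 1) w : ℤ)) * (1 - X ^ (2 * (N + 1))) =
        (PowerSeries.mk fun w => (cnt k i N w : ℤ)) * (1 + X ^ (2 * i + 1 + 2 * k * N)) := by
      rw [mul_comm, mul_comm _ (1 + _)]
      ext w
      rw [sub_mul, add_mul, one_mul, one_mul, map_sub, map_add, coeff_X_pow_mul',
        coeff_X_pow_mul']
      simp only [coeff_mk]
      rw [cnt.eq_def k i (N + 1) w]
      push_cast
      ring
    linear_combination (∏ x ∈ Finset.range N, (1 - (X : ℤ⟦X⟧) ^ (2 * (x + 1)))) * key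

open PowerSeries PowerSeries.WithPiTopology in
/-- Generating function of partitions with parts in a finite set. -/
theorem mk_restricted (S : Finset ℕ) (hS : 0 ∉ S) :
    (PowerSeries.mk fun n => ((Nat.Partition.restricted n (· ∈ S)).card : ℤ)) *
      ∏ c ∈ S, (1 - (X : ℤ⟦X⟧) ^ c) = 1 := by
  let _ : TopologicalSpace ℤ := ⊥
  have _ : DiscreteTopology ℤ := ⟨rfl⟩
  have h := Nat.Partition.hasProd_powerSeriesMk_card_restricted ℤ (· ∈ S)
  set T : Finset ℕ := S.image (fun c => c - 1) with hT
  have hmem : ∀ m, m + 1 ∈ S ↔ m ∈ T := by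
    intro m
    rw [hT, Finset.mem_image]
    constructor
    · intro hm; exact ⟨m + 1, hm, by omega⟩
    · rintro ⟨c, hc, rfl⟩
      have : c ≠ 0 := by rintro rfl; exact hS hc
      rwa [Nat.sub_add_cancel (by omega)]
  have hfin : HasProd (fun m => if m + 1 ∈ S then ∑' j : ℕ, (X : ℤ⟦X⟧) ^ ((m + 1) * j) else 1)
      (∏ m ∈ T, if m + 1 ∈ S then ∑' j : ℕ, (X : ℤ⟦X⟧) ^ ((m + 1) * j) else 1) :=
    hasProd_prod_of_ne_finset_one (by
      intro m hm
      rw [if_neg]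
      rwa [hmem])
  rw [h.unique hfin]
  have hprod : ∏ c ∈ S, (1 - (X : ℤ⟦X⟧) ^ c) = ∏ m ∈ T, (1 - (X : ℤ⟦X⟧) ^ (m + 1)) := by
    symm
    apply Finset.prod_bij (fun m _ => m + 1)
    · intro m hm; exact (hmem m).2 hm
    · intro a _ b _ h; simpa using h
    · intro c hc
      have : c ≠ 0 := by rintro rfl; exact hS hc
      exact ⟨c - 1, (hmem _).1 (by rwa [Nat.sub_add_cancel (by omega)]), by omega⟩
    · intro m _; rfl
  rw [hprod, ← Finset.prod_mul_distrib]
  apply Finset.prod_eq_one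
  intro m hm
  rw [if_pos ((hmem m).2 hm)]
  simp_rw [pow_mul]
  exact PowerSeries.WithPiTopology.tsum_pow_mul_one_sub_of_constantCoeff_eq_zero (by simp)

/-- Allowed parts on the product side, truncated. -/
def evens (k i n : ℕ) : Finset ℕ :=
  ((Finset.range (2 * k * n)).filter (fun m => (m + 1) % (2 * k) ≠ 2 * i + 1)).image
    (fun m => 2 * (m + 1))

def odds (k i n : ℕ) : Finset ℕ :=
  (Finset.range n).image (fun j => 2 * i + 1 + 2 * k * j)

open PowerSeries in
theorem prod_parts (k i n : ℕ) (hi : i < k) :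
    (∏ c ∈ evens k i n ∪ odds k i n, (1 - (X : ℤ⟦X⟧) ^ c)) *
      ∏ j ∈ Finset.range n, (1 + (X : ℤ⟦X⟧) ^ (2 * i + 1 + 2 * k * j)) =
    ∏ m ∈ Finset.range (2 * k * n), (1 - (X : ℤ⟦X⟧) ^ (2 * (m + 1))) := by
  have hk0 : 0 < 2 * k := by omega
  have hdisj : Disjoint (evens k i n) (odds k i n) := by
    rw [Finset.disjoint_left]
    intro c hc hc'
    simp only [evens, odds, Finset.mem_image] at hc hc'
    obtain ⟨m, _, rfl⟩ := hc
    obtain ⟨j, _, h⟩ := hc'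
    rw [mul_assoc] at h
    omega
  have hinj : ∀ a b : ℕ, 2 * k * a = 2 * k * b → a = b := fun a b h =>
    Nat.eq_of_mul_eq_mul_left hk0 h
  rw [Finset.prod_union hdisj]
  have h1 : ∏ c ∈ odds k i n, (1 - (X : ℤ⟦X⟧) ^ c) =
      ∏ j ∈ Finset.range n, (1 - (X : ℤ⟦X⟧) ^ (2 * i + 1 + 2 * k * j)) := by
    rw [odds, Finset.prod_image]
    intro a _ b _ h
    exact hinj a b (by simp only at h; omega)
  have h2 : ∏ c ∈ evens k i n, (1 - (X : ℤ⟦X⟧) ^ c) =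
      ∏ m ∈ (Finset.range (2 * k * n)).filter (fun m => (m + 1) % (2 * k) ≠ 2 * i + 1),
        (1 - (X : ℤ⟦X⟧) ^ (2 * (m + 1))) := by
    rw [evens, Finset.prod_image]
    intro a _ b _ h
    simp only at h; omega
  have h3 : (Finset.range (2 * k * n)).filter (fun m => ¬ (m + 1) % (2 * k) ≠ 2 * i + 1) =
      (Finset.range n).image (fun j => 2 * i + 2 * k * j) := by
    ext m
    simp only [Finset.mem_filter, Finset.mem_image, Finset.mem_range, not_not]
    constructor
    · rintro ⟨ha, hb⟩
      have hd := Nat.div_add_mod (m + 1) (2 * k)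
      refine ⟨(m + 1) / (2 * k), ?_, by omega⟩
      by_contra hlt
      have := Nat.mul_le_mul_left (2 * k) (not_lt.1 hlt)
      omega
    · rintro ⟨j, hj, rfl⟩
      constructor
      · have := Nat.mul_le_mul_left (2 * k) (Nat.succ_le_of_lt hj)
        rw [Nat.mul_succ] at this
        omega
      · rw [show 2 * i + 2 * k * j + 1 = (2 * i + 1) + 2 * k * j by ring, Nat.add_mul_mod_self_left,
          Nat.mod_eq_of_lt (by omega)]
  rw [h1, h2, mul_assoc, ← Finset.prod_mul_distrib, ← Finset.prod_filter_mul_prod_filter_not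
    (Finset.range (2 * k * n)) (fun m => (m + 1) % (2 * k) ≠ 2 * i + 1), h3, Finset.prod_image]
  · congr 1
    apply Finset.prod_congr rfl
    intro j _
    ring
  · intro a _ b _ h
    exact hinj a b (by simp only at h; omega)

open PowerSeries in
theorem prod_tail (n : ℕ) (s : Finset ℕ) (hs : ∀ m ∈ s, n ≤ m) :
    ∃ R : ℤ⟦X⟧, ∏ m ∈ s, (1 - (X : ℤ⟦X⟧) ^ (2 * (m + 1))) = 1 + X ^ (n + 1) * R := by
  induction s using Finset.induction_on with
  | empty => exact ⟨0, by simp⟩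
  | insert a s ha ih =>
    obtain ⟨R, hR⟩ := ih (fun m hm => hs m (Finset.mem_insert_of_mem hm))
    have hle : n ≤ a := hs a (Finset.mem_insert_self _ _)
    obtain ⟨d, hd⟩ : ∃ d, 2 * (a + 1) = n + 1 + d := ⟨2 * (a + 1) - (n + 1), by omega⟩
    rw [Finset.prod_insert ha, hR, hd, pow_add]
    exact ⟨R - X ^ d - X ^ d * X ^ (n + 1) * R, by ring⟩

open PowerSeries in
theorem card_restricted (k i n : ℕ) (hi : i < k) :
    (Nat.Partition.restricted n (· ∈ evens k i n ∪ odds k i n)).card = cnt k i n n := by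
  have h0 : 0 ∉ evens k i n ∪ odds k i n := by
    simp [evens, odds]
  have hA := mk_restricted _ h0
  have hB := mk_cnt k i n
  have hP := prod_parts k i n hi
  set P := (PowerSeries.mk fun m =>
    ((Nat.Partition.restricted m (· ∈ evens k i n ∪ odds k i n)).card : ℤ)) with hPdef
  have hsplit := Finset.prod_range_mul_prod_Ico
    (fun m => (1 - (X : ℤ⟦X⟧) ^ (2 * (m + 1)))) (show n ≤ 2 * k * n from
      Nat.le_mul_of_pos_left n (by omega))
  obtain ⟨R, hR⟩ := prod_tail n (Finset.Ico n (2 * k * n)) (fun m hm => (Finset.mem_Ico.1 hm).1)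
  rw [hR] at hsplit
  have hne : (∏ m ∈ Finset.range n, (1 - (X : ℤ⟦X⟧) ^ (2 * (m + 1)))) ≠ 0 := by
    rw [Finset.prod_ne_zero_iff]
    intro m _ h
    have := congrArg (constantCoeff (R := ℤ)) h
    simp at this
  have key : P * (1 + X ^ (n + 1) * R) = PowerSeries.mk fun w => (cnt k i n w : ℤ) := by
    apply mul_right_cancel₀ hne
    rw [hB, mul_assoc, mul_comm (1 + _), hsplit, ← hP, ← mul_assoc, hA, one_mul]
  have := congrArg (coeff n) key
  rw [mul_add, mul_one, mul_left_comm, map_add, coeff_X_pow_mul', if_neg (by omega), add_zero,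
    hPdef, coeff_mk, coeff_mk] at this
  exact_mod_cast this

theorem mem_parts (k i n c : ℕ) (hi : i < k) (hc0 : 0 < c) (hcn : c ≤ n) :
    c ∈ evens k i n ∪ odds k i n ↔ (Even c ∧ c % (4 * k) ≠ 4 * i + 2) ∨
        (Odd c ∧ (c % (4 * k) = 2 * i + 1 ∨ c % (4 * k) = 2 * k + 2 * i + 1)) := by
  have hnk : n ≤ k * n := Nat.le_mul_of_pos_left n (by omega)
  have hmod : ∀ m, (2 * m) % (4 * k) = 2 * (m % (2 * k)) := by
    intro m
    rw [show 4 * k = 2 * (2 * k) by ring, Nat.mul_mod_mul_left]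
  have hm2 : ∀ c, c % (2 * k) = c % (4 * k) % (2 * k) := by
    intro c
    rw [Nat.mod_mod_of_dvd]
    exact ⟨2, by ring⟩
  simp only [Finset.mem_union, evens, odds, Finset.mem_image, Finset.mem_filter, Finset.mem_range]
  apply or_congr
  · constructor
    · rintro ⟨m, ⟨_, h⟩, rfl⟩
      refine ⟨even_two_mul _, ?_⟩
      rw [hmod]; omega
    · rintro ⟨⟨m, hm⟩, h⟩
      have hm' : c = 2 * m := by omega
      subst hm'
      rw [hmod] at h
      refine ⟨m - 1, ⟨?_, ?_⟩, by omega⟩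
      · rw [mul_assoc]; omega
      · rw [Nat.sub_add_cancel (by omega)]; omega
  · constructor
    · rintro ⟨j, _, rfl⟩
      constructor
      · rw [mul_assoc, Nat.odd_iff]; omega
      · have hlt := Nat.mod_lt (2 * i + 1 + 2 * k * j) (show 0 < 4 * k by omega)
        have h := hm2 (2 * i + 1 + 2 * k * j)
        rw [Nat.add_mul_mod_self_left, Nat.mod_eq_of_lt (show 2 * i + 1 < 2 * k by omega)] at h
        set r := (2 * i + 1 + 2 * k * j) % (4 * k)
        rcases lt_or_ge r (2 * k) with hr | hr
        · rw [Nat.mod_eq_of_lt hr] at h; omega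
        · rw [Nat.mod_eq_sub_mod hr, Nat.mod_eq_of_lt (by omega)] at h; omega
    · rintro ⟨_, h⟩
      have h' : c % (2 * k) = 2 * i + 1 := by
        rw [hm2]
        rcases h with h | h <;> rw [h]
        · exact Nat.mod_eq_of_lt (by omega)
        · rw [add_assoc, Nat.add_mod_left]
          exact Nat.mod_eq_of_lt (by omega)
      have hd := Nat.div_add_mod c (2 * k)
      refine ⟨c / (2 * k), ?_, by omega⟩
      have := Nat.div_lt_self hc0 (show 1 < 2 * k by omega)
      omega

theorem card_left (k i n : ℕ) (hi : i < k) :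
    Nat.card {p : Nat.Partition n //
      ∀ c ∈ p.parts, (Even c ∧ c % (4 * k) ≠ 4 * i + 2) ∨
        (Odd c ∧ (c % (4 * k) = 2 * i + 1 ∨ c % (4 * k) = 2 * k + 2 * i + 1))} = cnt k i n n := by
  rw [← card_restricted k i n hi, Nat.card_eq_fintype_card, Fintype.card_subtype,
    Nat.Partition.restricted]
  congr 1
  ext p
  simp only [Finset.mem_filter, Finset.mem_univ, true_and]
  refine forall₂_congr fun c hc => ?_
  refine (mem_parts k i n c hi (p.parts_pos hc) ?_).symm
  have := Multiset.le_sum_of_mem hc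
  rwa [p.parts_sum] at this

/-- The map re-introducing `i`. -/
def g (i c : ℕ) : ℕ := if Odd c then c + 2 * i else c

theorem g_inj (i : ℕ) : Function.Injective (g i) := by
  intro a b h
  simp only [g, Nat.odd_iff] at h
  split_ifs at h <;> omega

/-- The set of multisets on the difference side. -/
def D (k i n : ℕ) : Set (Multiset ℕ) := {P | (∀ c ∈ P, 0 < c) ∧ P.sum = n ∧
      (∀ b ∈ P, Odd b →
        (∀ c : ℕ, Even c → b + 1 ≤ c + 2 * i → c + 2 * i + 3 ≤ b + 2 * k →
          Multiset.count c P = 0) ∧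
        (∀ c : ℕ, Odd c → b ≤ c → c + 2 ≤ b + 2 * k →
          Multiset.count c P ≤ if c = b then 1 else 0)) ∧
      (∀ c ∈ P, Odd c → 2 * i + 1 ≤ c)}

/-- Drop zeros and re-introduce `i`. -/
def phi (i : ℕ) (M : Multiset ℕ) : Multiset ℕ := (M.filter (fun x => x ≠ 0)).map (g i)

theorem split_zero (M : Multiset ℕ) :
    M.filter (fun x => x ≠ 0) + Multiset.replicate (M.count 0) 0 = M := by
  conv_rhs => rw [← Multiset.filter_add_not (fun x => x ≠ 0) M]
  congr 1
  simp only [not_not]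
  rw [Multiset.filter_eq']

theorem phi_injOn (k i N d w : ℕ) : Set.InjOn (phi i) (C k i N d w) := by
  rintro M ⟨hM, _, _⟩ M' ⟨hM', _, _⟩ h
  have hf : M.filter (fun x => x ≠ 0) = M'.filter (fun x => x ≠ 0) :=
    Multiset.map_injective (g_inj i) h
  have h1 := split_zero M
  have h2 := split_zero M'
  have c1 := congrArg Multiset.card h1
  have c2 := congrArg Multiset.card h2
  rw [Multiset.card_add, Multiset.card_replicate] at c1 c2
  rw [hf] at c1
  have : M.count 0 = M'.count 0 := by omega
  rw [← h1, ← h2, hf, this]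

theorem wt_phi (i : ℕ) (M : Multiset ℕ) : (phi i M).sum = wt i M := by
  conv_rhs => rw [← split_zero M]
  simp [wt, phi]
  rfl

theorem odd_g (i c : ℕ) : Odd (g i c) ↔ Odd c := by
  unfold g; split_ifs with h
  · simp only [h, iff_true]; rw [Nat.odd_iff] at *; omega
  · rfl

theorem g_odd (i c : ℕ) (h : Odd c) : g i c = c + 2 * i := if_pos h

theorem g_even (i c : ℕ) (h : Even c) : g i c = c := if_neg (Nat.not_odd_iff_even.2 h)

theorem cond_iff (k i : ℕ) (hk : 1 ≤ k) (P : Multiset ℕ) :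
      (∀ b ∈ P, Odd b →
        (∀ c : ℕ, Even c → b + 1 ≤ c + 2 * i → c + 2 * i + 3 ≤ b + 2 * k →
          Multiset.count c P = 0) ∧
        (∀ c : ℕ, Odd c → b ≤ c → c + 2 ≤ b + 2 * k →
          Multiset.count c P ≤ if c = b then 1 else 0)) ↔
      ∀ b ∈ P, Odd b →
        (∀ c ∈ P, Even c → b + 1 ≤ c + 2 * i → c + 2 * i + 3 ≤ b + 2 * k → False) ∧
        P.count b ≤ 1 ∧ (∀ c ∈ P, Odd c → b < c → b + 2 * k ≤ c) := by
  refine forall₃_congr fun b hb hbo => and_congr ?_ ?_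
  · constructor
    · intro h c hc he x y
      exact Multiset.count_eq_zero.1 (h c he x y) hc
    · intro h c he x y
      exact Multiset.count_eq_zero.2 fun hc => h c hc he x y
  · constructor
    · intro h
      constructor
      · simpa using h b hbo le_rfl (by omega)
      · intro c hc ho x
        by_contra hlt
        have := h c ho (by omega) (by rw [Nat.odd_iff] at *; omega)
        rw [if_neg (by omega)] at this
        have := Multiset.count_pos.2 hc
        omega
    · rintro ⟨h1, h2⟩ c ho x y
      split_ifs with hcb
      · rwa [hcb]
      · rw [Nat.le_zero, Multiset.count_eq_zero]
        intro hc
        have := h2 c hc ho (by omega)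
        omega

theorem good_phi (k i : ℕ) (hk : 1 ≤ k) (M : Multiset ℕ) : Good k M ↔
      (∀ b ∈ phi i M, Odd b →
        (∀ c : ℕ, Even c → b + 1 ≤ c + 2 * i → c + 2 * i + 3 ≤ b + 2 * k →
          Multiset.count c (phi i M) = 0) ∧
        (∀ c : ℕ, Odd c → b ≤ c → c + 2 ≤ b + 2 * k →
          Multiset.count c (phi i M) ≤ if c = b then 1 else 0)) := by
  rw [cond_iff k i hk]
  have hcount : ∀ b, b ≠ 0 → (phi i M).count (g i b) = M.count b := by
    intro b hb
    rw [phi, Multiset.count_map_eq_count' _ _ (g_inj i), Multiset.count_filter_of_pos (p := fun x => x ≠ 0) hb]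
  have hmem : ∀ c, c ∈ phi i M ↔ ∃ x, (x ∈ M ∧ x ≠ 0) ∧ g i x = c := by
    intro c; simp only [phi, Multiset.mem_map, Multiset.mem_filter]
  have hev : ∀ x, Even (g i x) ↔ Even x := by
    intro x; rw [← Nat.not_odd_iff_even, odd_g, Nat.not_odd_iff_even]
  constructor
  · intro h b hb hbo
    obtain ⟨x, ⟨hx, hx0⟩, rfl⟩ := (hmem b).1 hb
    rw [odd_g] at hbo
    obtain ⟨h1, h2, h3⟩ := h x hx hbo
    rw [hcount x hx0, g_odd i x hbo]
    refine ⟨?_, h2, ?_⟩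
    · intro c hc he
      obtain ⟨y, ⟨hy, hy0⟩, rfl⟩ := (hmem c).1 hc
      rw [hev] at he
      rw [g_even i y he]
      intro u v
      exact h1 y hy he (by omega) (by omega)
    · intro c hc ho
      obtain ⟨y, ⟨hy, hy0⟩, rfl⟩ := (hmem c).1 hc
      rw [odd_g] at ho
      rw [g_odd i y ho]
      intro u
      have := h3 y hy ho (by omega)
      omega
  · intro h x hx hxo
    have hx0 : x ≠ 0 := by rintro rfl; simp at hxo
    obtain ⟨h1, h2, h3⟩ := h (g i x) ((hmem _).2 ⟨x, ⟨hx, hx0⟩, rfl⟩) ((odd_g i x).2 hxo)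
    rw [hcount x hx0] at h2
    rw [g_odd i x hxo] at h1 h3
    refine ⟨?_, h2, ?_⟩
    · intro y hy he u v
      have := h1 (g i y) ((hmem _).2 ⟨y, ⟨hy, by omega⟩, rfl⟩) ((hev y).2 he)
      rw [g_even i y he] at this
      exact this (by omega) (by omega)
    · intro y hy ho u
      have := h3 (g i y) ((hmem _).2 ⟨y, ⟨hy, by omega⟩, rfl⟩) ((odd_g i y).2 ho)
      rw [g_odd i y ho] at this
      have := this (by omega)
      omega

theorem card_le_sum_of_pos (P : Multiset ℕ) (h : ∀ c ∈ P, 0 < c) : P.card ≤ P.sum := by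
  have := Multiset.card_nsmul_le_sum (s := P) (a := 1) (fun c hc => h c hc)
  simpa using this

theorem phi_surj (i : ℕ) (P : Multiset ℕ) (r : ℕ) (h0 : ∀ c ∈ P, 0 < c)
    (hodd : ∀ c ∈ P, Odd c → 2 * i + 1 ≤ c) :
    phi i (P.map (fun c => if Odd c then c - 2 * i else c) + Multiset.replicate r 0) = P := by
  unfold phi
  rw [Multiset.filter_add, Multiset.filter_eq_self.2, Multiset.filter_eq_nil.2, add_zero,
    Multiset.map_map]
  · conv_rhs => rw [← Multiset.map_id P]
    apply Multiset.map_congr rfl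
    intro c hc
    have a := h0 c hc
    have b := hodd c hc
    simp only [Function.comp, id, g]
    rcases Nat.even_or_odd c with he | ho
    · simp only [Nat.not_odd_iff_even.2 he, if_false]
    · have := b ho
      have h2 : Odd (c - 2 * i) := by rw [Nat.odd_iff] at *; omega
      simp only [ho, if_true, h2]; omega
  · intro a ha; simp [Multiset.eq_of_mem_replicate ha]
  · intro a ha
    obtain ⟨c, hc, rfl⟩ := Multiset.mem_map.1 ha
    have := h0 c hc
    have := hodd c hc
    split_ifs with ho
    · have := this ho; omega
    · omega

theorem phi_image (k i n : ℕ) (hk : 1 ≤ k) : phi i '' C k i n 0 n = D k i n := by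
  ext P
  constructor
  · rintro ⟨M, ⟨h1, h2, h3⟩, rfl⟩
    refine ⟨?_, ?_, (good_phi k i hk M).1 h2, ?_⟩
    · intro c hc
      simp only [phi, Multiset.mem_map, Multiset.mem_filter] at hc
      obtain ⟨x, ⟨_, hx⟩, rfl⟩ := hc
      unfold g; split_ifs <;> omega
    · rw [wt_phi]; omega
    · intro c hc ho
      simp only [phi, Multiset.mem_map, Multiset.mem_filter] at hc
      obtain ⟨x, ⟨_, hx⟩, rfl⟩ := hc
      rw [odd_g] at ho
      rw [g_odd i x ho]; omega
  · rintro ⟨h1, h2, h3, h4⟩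
    have hphi := phi_surj i P (n - P.card) h1 h4
    refine ⟨_, ⟨?_, ?_, ?_⟩, hphi⟩
    · rw [Multiset.card_add, Multiset.card_map, Multiset.card_replicate]
      have := card_le_sum_of_pos P h1
      omega
    · rw [good_phi k i hk, hphi]; exact h3
    · rw [← wt_phi, hphi, h2]; rfl

theorem card_right (k i n : ℕ) (hk : 1 ≤ k) :
    Nat.card {p : Nat.Partition n //
      (∀ b ∈ p.parts, Odd b →
        (∀ c : ℕ, Even c → b + 1 ≤ c + 2 * i → c + 2 * i + 3 ≤ b + 2 * k →
          Multiset.count c p.parts = 0) ∧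
        (∀ c : ℕ, Odd c → b ≤ c → c + 2 ≤ b + 2 * k →
          Multiset.count c p.parts ≤ if c = b then 1 else 0)) ∧
      (∀ c ∈ p.parts, Odd c → 2 * i + 1 ≤ c)} = cnt k i n n := by
  have h : (D k i n).encard = cnt k i n n := by
    rw [← phi_image k i n hk, (phi_injOn k i n 0 n).encard_image, encard_C k i hk]
  have h' : Nat.card (D k i n) = cnt k i n n := by
    rw [Nat.card_coe_set_eq, Set.ncard, h]; rfl
  rw [← h']
  refine Nat.card_congr
    { toFun := fun p => ⟨p.1.parts, fun c hc => p.1.parts_pos hc, p.1.parts_sum, p.2⟩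
      invFun := fun P => ⟨⟨P.1, fun {c} hc => P.2.1 c hc, P.2.2.1⟩, P.2.2.2⟩
      left_inv := fun p => rfl
      right_inv := fun P => rfl }

end AndrewsInterp

/-- The family of corollaries interpolating between Andrews's identities (`i = k−1`)
and their dual (`i = 0`). For `k ≥ 2` and `0 ≤ i ≤ k−1`: partitions of `n` whose parts
are even and `≢ 4i+2 (mod 4k)`, or odd and `≡ 2i+1` or `2k+2i+1 (mod 4k)`, are
equinumerous with partitions of `n` in which an odd part `b = 2j+1` forbids any other
even part in `{2j−2i+2, 2j−2i+4, …, 2j+2k−2i−2}`, forbids any other odd part in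
`{2j+1, 2j+3, …, 2j+2k−1}`, and every odd part is at least `2i+1`. -/
theorem andrews_interpolating_family (k i : ℕ) (hk : 2 ≤ k) (hi : i ≤ k - 1) (n : ℕ) :
    Nat.card {p : Nat.Partition n //
      ∀ c ∈ p.parts, (Even c ∧ c % (4 * k) ≠ 4 * i + 2) ∨
        (Odd c ∧ (c % (4 * k) = 2 * i + 1 ∨ c % (4 * k) = 2 * k + 2 * i + 1))} =
    Nat.card {p : Nat.Partition n //
      (∀ b ∈ p.parts, Odd b →
        (∀ c : ℕ, Even c → b + 1 ≤ c + 2 * i → c + 2 * i + 3 ≤ b + 2 * k →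
          Multiset.count c p.parts = 0) ∧
        (∀ c : ℕ, Odd c → b ≤ c → c + 2 ≤ b + 2 * k →
          Multiset.count c p.parts ≤ if c = b then 1 else 0)) ∧
      (∀ c ∈ p.parts, Odd c → 2 * i + 1 ≤ c)} := by
  rw [AndrewsInterp.card_left k i n (by omega), AndrewsInterp.card_right k i n (by omega)]
end

section
/- For every n, the number of partitions of n with all parts congruent to ±1 modulo 6 equals the number of partitions of n in which adjacent parts differ by at least 3, and by at least 6 if both are divisible by 3. -/
open Finset PowerSeries

/-- Polynomials `S_m(x)` counting Schur partitions with largest part at most `m`, where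
multiples of three have weight `x ^ 2` and other parts have weight `x`. -/
def schS {R : Type*} [CommRing R] (x q : R) : ℕ → R
  | 0 => 1
  | m + 1 => schS x q m + (if 3 ∣ m + 1 then x ^ 2 * q ^ (m + 1) * schS x q (m - 3)
      else x * q ^ (m + 1) * schS x q (m - 2))
termination_by m => m
decreasing_by all_goals omega

section Alg

variable {R : Type*} [CommRing R] (x q : R)

lemma schS_zero : schS x q 0 = 1 := by rw [schS]

lemma schS_a (n : ℕ) :
    schS x q (3 * n + 1) = schS x q (3 * n) + x * q ^ (3 * n + 1) * schS x q (3 * n - 2) := by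
  rw [schS, if_neg (by omega)]

lemma schS_b (n : ℕ) :
    schS x q (3 * n + 2) = schS x q (3 * n + 1) + x * q ^ (3 * n + 2) * schS x q (3 * n - 1) := by
  rw [schS, if_neg (by omega)]
  rfl

lemma schS_c (n : ℕ) :
    schS x q (3 * n + 3) = schS x q (3 * n + 2) + x ^ 2 * q ^ (3 * n + 3) * schS x q (3 * n - 1) := by
  rw [schS, if_pos (by omega)]
  rfl

/-- Three-term recurrence for `T_n = S_{3n+2}`. -/
lemma schS_rec (n : ℕ) :
    schS x q (3 * n + 8) = schS x q (3 * n + 5) * (1 + x * q ^ (3 * n + 7) + x * q ^ (3 * n + 8))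
      + x ^ 2 * q ^ (3 * n + 6) * (1 - q ^ (3 * n + 6)) * schS x q (3 * n + 2) := by
  have h1 := schS_b x q (n + 2)
  have h2 := schS_a x q (n + 2)
  have h3 := schS_c x q (n + 1)
  have h4 := schS_b x q (n + 1)
  simp only [Nat.mul_add, Nat.reduceMul, Nat.add_assoc, Nat.reduceAdd, Nat.reduceSubDiff] at h1 h2 h3 h4
  rw [h1, h2, h3]
  linear_combination (-x * q ^ (3 * n + 7)) * h4

lemma schS_two : schS x q 2 = 1 + x * q + x * q ^ 2 := by
  have h1 := schS_a x q 0
  have h2 := schS_b x q 0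
  simp [schS_zero] at h1 h2
  rw [h2, h1]

lemma schS_five : schS x q 5 = schS x q 2 * (1 + x * q ^ 4 + x * q ^ 5)
      + x ^ 2 * q ^ 3 * (1 - q ^ 3) := by
  have h1 := schS_b x q 1
  have h2 := schS_a x q 1
  have h3 := schS_c x q 0
  have h4 := schS_a x q 0
  simp [schS_zero] at h1 h2 h3 h4
  rw [h1, h2, h3, h4, schS_two]
  ring

lemma schS_six (n : ℕ) : schS x q (3 * n + 6) =
    schS x q (3 * n + 5) + x ^ 2 * q ^ (3 * n + 6) * schS x q (3 * n + 2) := by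
  have h3 := schS_c x q (n + 1)
  rw [show 3 * (n + 1) - 1 = 3 * n + 2 by omega] at h3
  exact h3

/-- The key finite identity. -/
lemma schS_key (n : ℕ) : schS x q (3 * n + 6) =
      (1 + x * q) * (1 + x * q ^ 2) * schS (x * q ^ 3) q (3 * n + 2) ∧
    schS x q (3 * (n + 1) + 6) =
      (1 + x * q) * (1 + x * q ^ 2) * schS (x * q ^ 3) q (3 * (n + 1) + 2) := by
  induction n with
  | zero =>
    have h0 := schS_rec x q 0
    have h1 := schS_six x q 0
    have h2 := schS_six x q 1
    simp only [Nat.mul_zero, Nat.zero_add, Nat.mul_one, Nat.reduceAdd] at h0 h1 h2 ⊢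
    constructor
    · rw [h1, schS_five, schS_two, schS_two]; ring
    · rw [h2, h0, schS_five, schS_five, schS_two, schS_two]; ring
  | succ n ih =>
    refine ⟨ih.2, ?_⟩
    obtain ⟨i1, i2⟩ := ih
    have r0 := schS_rec x q n
    have r1 := schS_rec x q (n + 1)
    have r2 := schS_rec (x * q ^ 3) q n
    have s0 := schS_six x q n
    have s1 := schS_six x q (n + 1)
    have s2 := schS_six x q (n + 2)
    simp only [Nat.mul_add, Nat.reduceMul, Nat.add_assoc, Nat.reduceAdd] at *
    have e : schS x q (3 * n + 12) = schS x q (3 * n + 9) *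
        (1 + x * q ^ 3 * q ^ (3 * n + 7) + x * q ^ 3 * q ^ (3 * n + 8))
        + (x * q ^ 3) ^ 2 * q ^ (3 * n + 6) * (1 - q ^ (3 * n + 6)) * schS x q (3 * n + 6) := by
      rw [s2, s1, s0, r1, r0]; ring
    rw [e, i1, i2, r2]; ring

lemma schS_base : schS x q 3 = (1 + x * q) * (1 + x * q ^ 2) := by
  have h3 := schS_c x q 0
  simp [schS_zero, schS_two] at h3
  rw [h3]; ring

lemma schS_sub_one (m : ℕ) : x ∣ schS x q m - 1 := by
  induction m with
  | zero => simp [schS_zero]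
  | succ m ih =>
    rw [schS]
    split_ifs
    · rw [add_sub_right_comm]
      exact dvd_add ih ⟨x * q ^ (m + 1) * schS x q (m - 3), by ring⟩
    · rw [add_sub_right_comm]
      exact dvd_add ih ⟨q ^ (m + 1) * schS x q (m - 2), by ring⟩

lemma schS_iter (m k : ℕ) : q ^ (3 * m) ∣ schS x q (3 * (m + 2 * k)) -
    (∏ j ∈ range k, (1 + x * q ^ (3 * j + 1)) * (1 + x * q ^ (3 * j + 2))) *
      schS (x * q ^ (3 * k)) q (3 * m) := by
  induction k generalizing x with
  | zero => simp
  | succ k ih =>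
    have key := (schS_key x q (m + 2 * k)).1
    have h1 := schS_a (x * q ^ 3) q (m + 2 * k)
    have h2 := schS_b (x * q ^ 3) q (m + 2 * k)
    have hi := ih (x * q ^ 3)
    rw [prod_range_succ', show 3 * (m + 2 * (k + 1)) = 3 * (m + 2 * k) + 6 by ring, key, h2, h1]
    have e : ∏ j ∈ range k, (1 + x * q ^ 3 * q ^ (3 * j + 1)) * (1 + x * q ^ 3 * q ^ (3 * j + 2))
        = ∏ j ∈ range k, (1 + x * q ^ (3 * (j + 1) + 1)) * (1 + x * q ^ (3 * (j + 1) + 2)) :=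
      prod_congr rfl fun j _ => by ring
    rw [e, show x * q ^ 3 * q ^ (3 * k) = x * q ^ (3 * (k + 1)) by ring] at hi
    obtain ⟨c, hc⟩ := hi
    refine ⟨(1 + x * q) * (1 + x * q ^ 2) * (c + q ^ (6 * k) * (x * q ^ 3 * q *
      schS (x * q ^ 3) q (3 * (m + 2 * k) - 2) + x * q ^ 3 * q ^ 2 *
      schS (x * q ^ 3) q (3 * (m + 2 * k) - 1))), ?_⟩
    linear_combination ((1 + x * q) * (1 + x * q ^ 2)) * hc

end Alg

/-- Schur partitions with largest part at most `m`. -/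
def schA : ℕ → Finset (List ℕ)
  | 0 => {[]}
  | m + 1 => schA m ∪ (if 3 ∣ m + 1 then (schA (m - 3)).image (List.cons (m + 1))
      else (schA (m - 2)).image (List.cons (m + 1)))
termination_by m => m
decreasing_by all_goals omega

lemma mem_schA (m : ℕ) (l : List ℕ) : l ∈ schA m ↔ (∀ x ∈ l, 0 < x) ∧
      l.IsChain (fun a b => b + 3 ≤ a ∧ ((3 ∣ a ∧ 3 ∣ b) → b + 6 ≤ a)) ∧
      ∀ y ∈ l.head?, y ≤ m := by
  induction m using Nat.strong_induction_on generalizing l with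
  | _ m ih =>
  cases m with
  | zero =>
    rw [schA]
    cases l with
    | nil => simp
    | cons a t => simp; omega
  | succ m =>
    have hm := ih m (by omega)
    have h2 := ih (m - 2) (by omega)
    have h3 := ih (m - 3) (by omega)
    rw [schA]
    cases l with
    | nil => simp [hm]
    | cons a t =>
      rw [mem_union, hm]
      cases t with
      | nil => split_ifs <;> simp [h2, h3] <;> omega
      | cons b t =>
        split_ifs <;> simp [h2, h3, List.isChain_cons_cons] <;> grind

lemma schS_eq_sum (m : ℕ) : schS (1 : ℤ⟦X⟧) X m = ∑ l ∈ schA m, (X : ℤ⟦X⟧) ^ l.sum := by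
  induction m using Nat.strong_induction_on with
  | _ m ih =>
  cases m with
  | zero => rw [schS, schA]; simp
  | succ m =>
    have hd : ∀ k, Disjoint (schA m) ((schA k).image (List.cons (m + 1))) := by
      intro k
      rw [Finset.disjoint_left]
      intro l hl hl'
      obtain ⟨t, _, rfl⟩ := mem_image.1 hl'
      have := ((mem_schA _ _).1 hl).2.2 (m + 1) (by simp)
      omega
    have hs : ∀ k, ∑ l ∈ (schA k).image (List.cons (m + 1)), (X : ℤ⟦X⟧) ^ l.sum
        = X ^ (m + 1) * ∑ l ∈ schA k, (X : ℤ⟦X⟧) ^ l.sum := by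
      intro k
      rw [sum_image (by intro a _ b _ h; simpa using h), mul_sum]
      simp [pow_add]
    rw [schS, schA]
    split_ifs
    · rw [sum_union (hd _), hs, ih m (by omega), ih (m - 3) (by omega)]; simp
    · rw [sum_union (hd _), hs, ih m (by omega), ih (m - 2) (by omega)]; simp

lemma card_schur (n m : ℕ) (h : n ≤ m) :
    ((Nat.card {l : List ℕ // (∀ x ∈ l, 0 < x) ∧ l.sum = n ∧
      l.IsChain (fun a b => b + 3 ≤ a ∧ ((3 ∣ a ∧ 3 ∣ b) → b + 6 ≤ a))} : ℕ) : ℤ) =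
    coeff n (schS (1 : ℤ⟦X⟧) X m) := by
  rw [schS_eq_sum, map_sum]
  simp only [coeff_X_pow]
  rw [sum_boole, Nat.subtype_card ((schA m).filter (fun l => n = l.sum))]
  intro l
  rw [mem_filter, mem_schA]
  constructor
  · rintro ⟨⟨h1, h2, h3⟩, h4⟩
    exact ⟨h1, h4.symm, h2⟩
  · rintro ⟨h1, h4, h2⟩
    refine ⟨⟨h1, h2, ?_⟩, h4.symm⟩
    intro y hy
    have := List.le_sum_of_mem (List.mem_of_mem_head? hy)
    omega

abbrev schP (c : ℕ) : Prop := c % 6 = 1 ∨ c % 6 = 5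

noncomputable def schQ : ℤ⟦X⟧ := PowerSeries.mk fun n ↦ (#(Nat.Partition.restricted n schP) : ℤ)

lemma schO_eq (k : ℕ) : ∏ i ∈ range (6 * k), (if schP (i + 1) then 1 - (X : ℤ⟦X⟧) ^ (i + 1) else 1)
    = ∏ j ∈ range k, (1 - (X : ℤ⟦X⟧) ^ (6 * j + 1)) * (1 - X ^ (6 * j + 5)) := by
  induction k with
  | zero => simp
  | succ k ih =>
    rw [prod_range_succ, ← ih, Nat.mul_succ]
    simp only [prod_range_succ, schP]
    rw [if_pos (by omega), if_neg (by omega), if_neg (by omega), if_neg (by omega),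
      if_pos (by omega), if_neg (by omega)]
    ring

open scoped PowerSeries.WithPiTopology in
lemma schQ_mul (N : ℕ) : ∀ᶠ k in Filter.atTop, (X : ℤ⟦X⟧) ^ N ∣
    schQ * (∏ j ∈ range k, (1 - (X : ℤ⟦X⟧) ^ (6 * j + 1)) * (1 - X ^ (6 * j + 5))) - 1 := by
  have h := Nat.Partition.hasProd_powerSeriesMk_card_restricted ℤ schP
  have h1 := (h.tendsto_prod_nat)
  rw [PowerSeries.WithPiTopology.tendsto_iff_coeff_tendsto] at h1
  have h2 : ∀ᶠ M in Filter.atTop, ∀ d ∈ range N, coeff d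
      (∏ i ∈ range M, if schP (i + 1) then ∑' j : ℕ, (X : ℤ⟦X⟧) ^ ((i + 1) * j) else 1)
      = coeff d schQ := by
    rw [Filter.eventually_all_finset]
    intro d _
    have h5 := h1 d
    rw [nhds_discrete, Filter.tendsto_pure] at h5
    exact h5
  have h3 : Filter.Tendsto (fun k : ℕ => 6 * k) Filter.atTop Filter.atTop :=
    Filter.tendsto_id.const_mul_atTop' (by norm_num)
  filter_upwards [h3.eventually h2] with k hk
  have h4 : (∏ i ∈ range (6 * k), if schP (i + 1) then ∑' j : ℕ, (X : ℤ⟦X⟧) ^ ((i + 1) * j) else 1)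
      * (∏ j ∈ range k, (1 - (X : ℤ⟦X⟧) ^ (6 * j + 1)) * (1 - X ^ (6 * j + 5))) = 1 := by
    rw [← schO_eq, ← prod_mul_distrib]
    apply prod_eq_one
    intro i _
    split_ifs
    · simp_rw [pow_mul]
      exact PowerSeries.WithPiTopology.tsum_pow_mul_one_sub_of_constantCoeff_eq_zero (by simp)
    · simp
  generalize (∏ j ∈ range k, (1 - (X : ℤ⟦X⟧) ^ (6 * j + 1)) * (1 - X ^ (6 * j + 5))) = O at *
  rw [← h4, ← sub_mul]
  apply Dvd.dvd.mul_right
  rw [X_pow_dvd_iff]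
  intro d hd
  rw [map_sub, hk d (by simpa using hd), sub_self]

noncomputable def schE (k : ℕ) : ℤ⟦X⟧ :=
  ∏ j ∈ range k, (1 - (X : ℤ⟦X⟧) ^ (3 * j + 1)) * (1 - X ^ (3 * j + 2))

noncomputable def schF (k : ℕ) : ℤ⟦X⟧ :=
  ∏ j ∈ range k, (1 - (X : ℤ⟦X⟧) ^ (6 * j + 2)) * (1 - X ^ (6 * j + 4))

lemma schE_mul (k : ℕ) : schE k *
    (∏ j ∈ range k, (1 + (X : ℤ⟦X⟧) ^ (3 * j + 1)) * (1 + X ^ (3 * j + 2))) = schF k := by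
  rw [schE, schF, ← prod_mul_distrib]
  exact prod_congr rfl fun j _ => by ring

lemma schE_two_mul (k : ℕ) : schE (2 * k) = schF k *
    (∏ j ∈ range k, (1 - (X : ℤ⟦X⟧) ^ (6 * j + 1)) * (1 - X ^ (6 * j + 5))) := by
  rw [schE, schF, ← prod_mul_distrib]
  induction k with
  | zero => simp
  | succ k ih =>
    rw [prod_range_succ, ← ih, Nat.mul_succ, prod_range_succ, prod_range_succ]
    ring

lemma schE_unit (k : ℕ) : IsUnit (schE k) := by
  rw [PowerSeries.isUnit_iff_constantCoeff, schE, map_prod]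
  simp

lemma schE_dvd (k d : ℕ) : (X : ℤ⟦X⟧) ^ k ∣ schE (k + d) - schE k := by
  induction d with
  | zero => simp
  | succ d ih =>
    have e : schE (k + (d + 1)) =
        schE (k + d) * ((1 - X ^ (3 * (k + d) + 1)) * (1 - X ^ (3 * (k + d) + 2))) := by
      rw [schE, ← Nat.add_assoc, prod_range_succ]; rfl
    obtain ⟨c, hc⟩ := ih
    refine ⟨c + schE (k + d) * (X ^ (2 * k + 3 * d)) *
      (- X - X ^ 2 + X ^ (3 * (k + d)) * X ^ 3), ?_⟩
    rw [e]
    linear_combination hc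

lemma schQ_dvd (N : ℕ) : ∀ᶠ k in Filter.atTop, (X : ℤ⟦X⟧) ^ N ∣
    (∏ j ∈ range k, (1 + (X : ℤ⟦X⟧) ^ (3 * j + 1)) * (1 + X ^ (3 * j + 2))) - schQ := by
  filter_upwards [schQ_mul N, Filter.eventually_ge_atTop N] with k hk hN
  have h1 := schE_mul k
  have h2 := schE_two_mul k
  have h3 := schE_dvd k k
  rw [← two_mul] at h3
  have h3 := (pow_dvd_pow X hN).trans h3
  generalize (∏ j ∈ range k, (1 + (X : ℤ⟦X⟧) ^ (3 * j + 1)) * (1 + X ^ (3 * j + 2))) = D at *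
  generalize (∏ j ∈ range k, (1 - (X : ℤ⟦X⟧) ^ (6 * j + 1)) * (1 - X ^ (6 * j + 5))) = O at *
  rw [← (schE_unit k).dvd_mul_left]
  obtain ⟨c, hc⟩ := hk
  obtain ⟨d, hd⟩ := h3
  refine ⟨schQ * d - c * schE k * D, ?_⟩
  linear_combination (-schE k * D) * hc + schQ * hd - schQ * h2 + schQ * O * h1


/-- Schur's 1926 partition theorem: partitions of `n` into parts `≡ ±1 (mod 6)`
are equinumerous with partitions of `n` (written as weakly decreasing lists of
positive parts) in which adjacent parts differ by at least `3`, and by at least `6`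
if both are divisible by `3`. -/
theorem schur_partition_theorem (n : ℕ) :
    Nat.card {p : Nat.Partition n // ∀ c ∈ p.parts, c % 6 = 1 ∨ c % 6 = 5} =
    Nat.card {l : List ℕ // (∀ x ∈ l, 0 < x) ∧ l.sum = n ∧
      l.Chain' (fun a b => b + 3 ≤ a ∧ ((3 ∣ a ∧ 3 ∣ b) → b + 6 ≤ a))} := by

  obtain ⟨k, hk, hn⟩ := ((schQ_dvd (n + 1)).and (Filter.eventually_ge_atTop (n + 1))).exists
  have h1 := card_schur n (3 * (k + 2 * k)) (by omega)
  have hL : Nat.card {p : Nat.Partition n // ∀ c ∈ p.parts, c % 6 = 1 ∨ c % 6 = 5} =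
      #(Nat.Partition.restricted n schP) := by
    rw [Nat.subtype_card (Nat.Partition.restricted n schP)]
    intro p
    simp [Nat.Partition.restricted, schP]
  have hQ : coeff n schQ = (#(Nat.Partition.restricted n schP) : ℤ) := by
    rw [schQ, coeff_mk]
  have h2 := (pow_dvd_pow (X : ℤ⟦X⟧) (show n + 1 ≤ 3 * k by omega)).trans
    (schS_iter (1 : ℤ⟦X⟧) X k k)
  have h3 := (pow_dvd_pow (X : ℤ⟦X⟧) (show n + 1 ≤ 3 * k by omega)).trans
    (schS_sub_one ((X : ℤ⟦X⟧) ^ (3 * k)) X (3 * k))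
  simp only [one_mul] at h2
  have h4 : (X : ℤ⟦X⟧) ^ (n + 1) ∣ schS (1 : ℤ⟦X⟧) X (3 * (k + 2 * k)) - schQ := by
    obtain ⟨a, ha⟩ := h2
    obtain ⟨b, hb⟩ := h3
    obtain ⟨c, hc⟩ := hk
    exact ⟨a + (∏ j ∈ range k, (1 + (X : ℤ⟦X⟧) ^ (3 * j + 1)) * (1 + X ^ (3 * j + 2))) * b + c,
      by linear_combination ha +
        (∏ j ∈ range k, (1 + (X : ℤ⟦X⟧) ^ (3 * j + 1)) * (1 + X ^ (3 * j + 2))) * hb + hc⟩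
  have h5 := X_pow_dvd_iff.1 h4 n (by omega)
  rw [map_sub, ← h1, hQ, sub_eq_zero] at h5
  rw [hL]
  exact_mod_cast h5.symm
end
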